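/- Fix positive integers a < b with c = a/b ∈ (0,1), and fix reals 0 < N0 ≤ Y. Then there exist a constant C > 0 and a positive integer T such that for all integers t ≥ T, with n = a·t and m = b·t, and for every vector y = (y_1,…,y_n) of reals with N0 ≤ y_1 ≤ … ≤ y_n ≤ Y, the second cumulant κ2 = μ1(2,n,m,y) − μ1(1,n,m,y)² satisfies |n²·κ2 − Ψ1(y)²·e²·(1−c)^{2(1−c)/c}·( (ln(1/(1−c)) − 2c)·Ψ2(y)² + c·Ψ3(y) )| ≤ C/n². -/

import Mathlib

open Finset

/-- Exact `p`-th moment of the GLRT statistic under `H₀`. -/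
noncomputable def mu0 (p n m : ℕ) : ℝ :=
  Real.Gamma ((m : ℝ) * n) / ((n : ℝ) ^ p * Real.Gamma ((m : ℝ) * n - p)) *
    ∏ j ∈ Finset.range n,
      Real.Gamma ((m : ℝ) - n + 1 - p / n + j) / Real.Gamma ((m : ℝ) - n + 1 + j)

/-- Exact `p`-th moment of the GLRT statistic under `H₁`, in terms of the covariance
eigenvalues `y`. -/
noncomputable def mu1 (p n m : ℕ) (y : Fin n → ℝ) : ℝ :=
  (Nat.factorial p : ℝ) / (n : ℝ) ^ p *
    (∏ i, y i ^ (-(p : ℝ) / n)) *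
    (∏ j ∈ Finset.range n,
      Real.Gamma ((m : ℝ) - n + 1 - p / n + j) / Real.Gamma ((m : ℝ) - n + 1 + j)) *
    ∑ k ∈ Finset.Nat.antidiagonalTuple n p,
      ∏ i, Real.Gamma ((m : ℝ) - p / n + k i) * y i ^ (k i)
        / (Real.Gamma ((k i : ℝ) + 1) * Real.Gamma ((m : ℝ) - p / n))

/-- `Ψ₁(y) = ∏ y_i^{-1/n}`. -/
noncomputable def Psi1 {n : ℕ} (y : Fin n → ℝ) : ℝ := ∏ i, y i ^ (-(1 : ℝ) / n)

/-- `Ψ_{ℓ+1}(y) = (1/n) Σ y_i^ℓ` for `ℓ ≥ 1`. -/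
noncomputable def PsiS {n : ℕ} (ℓ : ℕ) (y : Fin n → ℝ) : ℝ := (1 / (n : ℝ)) * ∑ i, y i ^ ℓ

/-! The sums over tuples of total degree `1` and `2` have closed forms, so `n² (μ₁(2) - μ₁(1)²)` is
`Ψ₁² (α Ψ₂² + β Ψ₃)` with `α` and `β` depending only on `n` and `m`, through the products
`P_p = ∏ Γ(x - p / n) / Γ(x)` over `x = m - n + 1, …, m`.

With `H x = x log x - x`, the difference `log Γ(x) - log Γ(x - s)` is close to
`s (H x - H (x - 1))`, and `log Γ(x + h) - 2 log Γ(x) + log Γ(x - h)` is close to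
`h² (log x - log (x - 1))`. Both errors tend to `0` at infinity, and the functional equation of `Γ`
turns their increments under `x ↦ x + 1` into elementary logarithms, which bounds them explicitly.
The main terms telescope over `x`, and with `c = n / m` this gives
`m² P₂ = e² (1 - c)^(2 (1 - c) / c) + O(1 / n²)` and
`n² log (P₂ / P₁²) = log (1 / (1 - c)) + O(1 / n²)`. -/

open Filter Asymptotics Topology

section Antidiagonal

variable {ι R : Type*} [DecidableEq ι]

theorem sum_prod_piAntidiag_cons [CommSemiring R] {s : Finset ι} {i : ι} (hi : i ∉ s)
    (f : ι → ℕ → R) (p : ℕ) :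
    ∑ k ∈ piAntidiag (cons i s hi) p, ∏ j ∈ cons i s hi, f j (k j) =
      ∑ q ∈ antidiagonal p, f i q.1 * ∑ k ∈ piAntidiag s q.2, ∏ j ∈ s, f j (k j) := by
  rw [piAntidiag_cons, sum_disjiUnion]
  refine sum_congr rfl fun q _ => ?_
  rw [sum_map, mul_sum]
  refine sum_congr rfl fun k hk => ?_
  have hki : k i = 0 := by
    by_contra h
    exact hi ((mem_piAntidiag.1 hk).2 i h)
  rw [prod_cons]
  congr 1
  · simp [hki]
  · refine prod_congr rfl fun j hj => ?_
    simp [ne_of_mem_of_not_mem hj hi]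

variable {f : ι → ℕ → R} (s : Finset ι)

theorem sum_prod_piAntidiag_zero [CommSemiring R] (hf : ∀ i, f i 0 = 1) :
    ∑ k ∈ piAntidiag s 0, ∏ i ∈ s, f i (k i) = 1 := by
  simp [hf]

theorem sum_prod_piAntidiag_one [CommSemiring R] (hf : ∀ i, f i 0 = 1) :
    ∑ k ∈ piAntidiag s 1, ∏ i ∈ s, f i (k i) = ∑ i ∈ s, f i 1 := by
  induction s using Finset.cons_induction with
  | empty => simp
  | cons i s hi ih =>
    rw [sum_prod_piAntidiag_cons, Nat.sum_antidiagonal_eq_sum_range_succ_mk]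
    simp only [sum_range_succ, range_zero, sum_empty, sum_cons, hf, tsub_zero, tsub_self, ih,
      sum_prod_piAntidiag_zero s hf]
    ring

theorem two_mul_sum_prod_piAntidiag_two [CommRing R] (hf : ∀ i, f i 0 = 1) :
    2 * ∑ k ∈ piAntidiag s 2, ∏ i ∈ s, f i (k i) =
      2 * ∑ i ∈ s, f i 2 + (∑ i ∈ s, f i 1) ^ 2 - ∑ i ∈ s, f i 1 ^ 2 := by
  induction s using Finset.cons_induction with
  | empty => simp
  | cons i s hi ih =>
    rw [sum_prod_piAntidiag_cons, Nat.sum_antidiagonal_eq_sum_range_succ_mk]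
    simp only [sum_range_succ, range_zero, sum_empty, sum_cons, hf, tsub_zero, Nat.reduceSub,
      sum_prod_piAntidiag_one s hf, tsub_self, sum_prod_piAntidiag_zero s hf]
    linear_combination ih

end Antidiagonal

/-- The product of Gamma quotients in the moment formulas: `q = m - n`, and `s = p / n` for the
`p`-th moment. -/
noncomputable def gammaRatioProd (q : ℝ) (n : ℕ) (s : ℝ) : ℝ :=
  ∏ j ∈ range n, Real.Gamma (q + 1 - s + j) / Real.Gamma (q + 1 + j)

/-- The coefficient of `Ψ₁² Ψ₂²` in `n² (μ₁(2) - μ₁(1)²)`. -/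
noncomputable def varianceCoeffOne (n m : ℕ) : ℝ :=
  (n : ℝ) ^ 2 * (gammaRatioProd (m - n) n (2 / n) * (m - 2 / n) ^ 2 -
    (gammaRatioProd (m - n) n (1 / n) * (m - 1 / n)) ^ 2)

/-- The coefficient of `Ψ₁² Ψ₃` in `n² (μ₁(2) - μ₁(1)²)`. -/
noncomputable def varianceCoeffTwo (n m : ℕ) : ℝ :=
  n * (m - 2 / n) * gammaRatioProd (m - n) n (2 / n)

section ExactMoments

variable {n m : ℕ} {y : Fin n → ℝ} {M : ℝ}

theorem Gamma_add_one_mul_div (hM : 0 < M) (x : ℝ) :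
    Real.Gamma (M + (1 : ℕ)) * x ^ 1 / (Real.Gamma (((1 : ℕ) : ℝ) + 1) * Real.Gamma M) = M * x := by
  have hΓ := (Real.Gamma_pos_of_pos hM).ne'
  rw [Nat.cast_one, Real.Gamma_add_one hM.ne', Real.Gamma_add_one one_ne_zero, Real.Gamma_one]
  field_simp

theorem Gamma_add_two_mul_div (hM : 0 < M) (x : ℝ) :
    Real.Gamma (M + (2 : ℕ)) * x ^ 2 / (Real.Gamma (((2 : ℕ) : ℝ) + 1) * Real.Gamma M) =
      M * (M + 1) / 2 * x ^ 2 := by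
  have hΓ := (Real.Gamma_pos_of_pos hM).ne'
  rw [show M + (2 : ℕ) = M + 1 + 1 by push_cast; ring, Real.Gamma_add_one (by positivity),
    Real.Gamma_add_one hM.ne', Real.Gamma_nat_eq_factorial, Nat.factorial_two]
  push_cast
  field_simp

theorem sum_antidiagonalTuple_one_Gamma (hM : 0 < M) (y : Fin n → ℝ) :
    ∑ k ∈ Nat.antidiagonalTuple n 1, ∏ i, Real.Gamma (M + k i) * y i ^ k i /
      (Real.Gamma ((k i : ℝ) + 1) * Real.Gamma M) = M * ∑ i, y i := by
  rw [← piAntidiag_univ_fin_eq_antidiagonalTuple,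
    sum_prod_piAntidiag_one (f := fun i k =>
      Real.Gamma (M + k) * y i ^ k / (Real.Gamma ((k : ℝ) + 1) * Real.Gamma M)) univ
    fun i => by simp [(Real.Gamma_pos_of_pos hM).ne']]
  simp only [Gamma_add_one_mul_div hM, mul_sum]

theorem sum_antidiagonalTuple_two_Gamma (hM : 0 < M) (y : Fin n → ℝ) :
    ∑ k ∈ Nat.antidiagonalTuple n 2, ∏ i, Real.Gamma (M + k i) * y i ^ k i /
      (Real.Gamma ((k i : ℝ) + 1) * Real.Gamma M) =
        (M ^ 2 * (∑ i, y i) ^ 2 + M * ∑ i, y i ^ 2) / 2 := by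
  have hsum := two_mul_sum_prod_piAntidiag_two (f := fun i k =>
    Real.Gamma (M + k) * y i ^ k / (Real.Gamma ((k : ℝ) + 1) * Real.Gamma M)) univ
    fun i => by simp [(Real.Gamma_pos_of_pos hM).ne']
  simp only [Gamma_add_one_mul_div hM, Gamma_add_two_mul_div hM, mul_pow, ← mul_sum] at hsum
  rw [← piAntidiag_univ_fin_eq_antidiagonalTuple]
  linear_combination hsum / 2

theorem prod_rpow_neg_two_div (hy : ∀ i, 0 < y i) :
    ∏ i, y i ^ (-(2 : ℝ) / n) = Psi1 y ^ 2 := by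
  rw [Psi1, ← prod_pow]
  refine prod_congr rfl fun i _ => ?_
  rw [← Real.rpow_mul_natCast (hy i).le]
  congr 1
  push_cast
  ring

theorem mu1_one (hm : 0 < (m : ℝ) - 1 / n) :
    mu1 1 n m y = Psi1 y * gammaRatioProd (m - n) n (1 / n) * (m - 1 / n) * PsiS 1 y := by
  unfold mu1
  simp only [Nat.cast_one, sum_antidiagonalTuple_one_Gamma hm, gammaRatioProd, Psi1, PsiS,
    Nat.factorial_one, pow_one]
  ring

theorem mu1_two (hy : ∀ i, 0 < y i) (hm : 0 < (m : ℝ) - 2 / n) :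
    mu1 2 n m y = Psi1 y ^ 2 * gammaRatioProd (m - n) n (2 / n) *
      ((m - 2 / n) ^ 2 * PsiS 1 y ^ 2 + (m - 2 / n) / n * PsiS 2 y) := by
  unfold mu1
  simp only [Nat.cast_ofNat, sum_antidiagonalTuple_two_Gamma hm, prod_rpow_neg_two_div hy,
    Nat.factorial_two, PsiS, pow_one]
  rw [← gammaRatioProd]
  ring

theorem sq_mul_mu1_two_sub_mu1_one_sq (hn : 2 ≤ n) (hnm : n ≤ m) (hy : ∀ i, 0 < y i) :
    (n : ℝ) ^ 2 * (mu1 2 n m y - mu1 1 n m y ^ 2) = Psi1 y ^ 2 *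
      (varianceCoeffOne n m * PsiS 1 y ^ 2 + varianceCoeffTwo n m * PsiS 2 y) := by
  have hn2 : (2 : ℝ) ≤ n := by exact_mod_cast hn
  have hnm' : (n : ℝ) ≤ m := by exact_mod_cast hnm
  have htwo : 2 / (n : ℝ) ≤ 1 := (div_le_one (by linarith)).2 hn2
  have hone : 1 / (n : ℝ) ≤ 2 / n := by gcongr; norm_num
  have hcancel : (n : ℝ) ^ 2 * ((m - 2 / n) / n) = n * (m - 2 / n) := by field_simp
  rw [mu1_one (by linarith), mu1_two hy (by linarith), varianceCoeffOne, varianceCoeffTwo]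
  linear_combination Psi1 y ^ 2 * gammaRatioProd (m - n) n (2 / n) * PsiS 2 y * hcancel

end ExactMoments

theorem abs_le_of_abs_sub_add_one_le {f g : ℝ → ℝ} {a x : ℝ}
    (h : ∀ x > a, |f x - f (x + 1)| ≤ g x - g (x + 1)) (hf : Tendsto f atTop (𝓝 0))
    (hg : Tendsto g atTop (𝓝 0)) (hx : a < x) : |f x| ≤ g x := by
  have telescope (k : ℕ) : |f x - f (x + k)| ≤ g x - g (x + k) := by
    induction k with
    | zero => simp
    | succ k ih =>
      have step := h (x + k) (by linarith [k.cast_nonneg (α := ℝ)])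
      rw [Nat.cast_succ, ← add_assoc]
      linarith [abs_sub_le (f x) (f (x + k)) (f (x + k + 1))]
  have hadd : Tendsto (fun k : ℕ => x + k) atTop atTop :=
    tendsto_atTop_add_const_left _ x tendsto_natCast_atTop_atTop
  simpa using le_of_tendsto_of_tendsto' ((hf.comp hadd).const_sub (f x)).abs
    ((hg.comp hadd).const_sub (g x)) telescope

section LogBounds

variable {x h s t u : ℝ}

theorem neg_div_one_sub_le_log_one_sub (hu : u < 1) : -(u / (1 - u)) ≤ Real.log (1 - u) := by
  have h1u : 1 - u ≠ 0 := by linarith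
  calc -(u / (1 - u)) = 1 - (1 - u)⁻¹ := by field_simp; ring
    _ ≤ Real.log (1 - u) := Real.one_sub_inv_le_log_of_pos (by linarith)

theorem log_one_sub_le_neg (hu : u < 1) : Real.log (1 - u) ≤ -u := by
  linarith [Real.log_le_sub_one_of_pos (sub_pos.2 hu)]

theorem abs_mul_log_one_sub_sub_log_one_sub_mul_le (ht : 0 ≤ t) (ht1 : t ≤ 1) (hu : 0 ≤ u)
    (hu1 : u < 1) : |t * Real.log (1 - u) - Real.log (1 - t * u)| ≤ t * (u / (1 - u) - u) := by
  have htu : t * u ≤ u := mul_le_of_le_one_left hu ht1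
  have hlower := mul_le_mul_of_nonneg_left (neg_div_one_sub_le_log_one_sub hu1) ht
  have hupper := mul_le_mul_of_nonneg_left (log_one_sub_le_neg hu1) ht
  have hlower' := neg_div_one_sub_le_log_one_sub (htu.trans_lt hu1)
  have hupper' := log_one_sub_le_neg (htu.trans_lt hu1)
  have hmono : t * u / (1 - t * u) ≤ t * (u / (1 - u)) := by
    rw [mul_div_assoc]
    gcongr
  rw [abs_le]
  constructor <;> linarith

theorem log_one_sub_sq_mul_inv (hh : 0 ≤ h) (hx : h < x) :
    Real.log (1 - h ^ 2 * (x ^ 2)⁻¹) =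
      Real.log (x + h) + Real.log (x - h) - 2 * Real.log x := by
  have hx0 : 0 < x := hh.trans_lt hx
  have hxh : 0 < x - h := sub_pos.2 hx
  rw [show 1 - h ^ 2 * (x ^ 2)⁻¹ = (x + h) * (x - h) / x ^ 2 by field_simp; ring,
    Real.log_div (by positivity) (by positivity), Real.log_mul (by positivity) hxh.ne',
    Real.log_pow]
  norm_cast

theorem log_one_sub_sq_inv (hx : 1 < x) :
    Real.log (1 - (x ^ 2)⁻¹) = Real.log (x + 1) + Real.log (x - 1) - 2 * Real.log x := by
  simpa using log_one_sub_sq_mul_inv zero_le_one hx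

theorem abs_log_sub_sub_log_add_le (hs1 : s ≤ 1) (hx : 1 < x) :
    |Real.log (x - s) - Real.log x + s * x⁻¹| ≤ s ^ 2 * (1 / (x - 1) - 1 / x) := by
  have hx1 : 0 < x - 1 := by linarith
  have hxs : 0 < x - s := by linarith
  have hsx : s / x < 1 := (div_lt_one (by positivity)).2 (by linarith)
  have hlog : Real.log (1 - s / x) = Real.log (x - s) - Real.log x := by
    rw [← Real.log_div hxs.ne' (by positivity), sub_div, div_self (by positivity)]
  have hlower := neg_div_one_sub_le_log_one_sub hsx
  have hupper := log_one_sub_le_neg hsx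
  have hlower_le : s / x / (1 - s / x) ≤ s * x⁻¹ + s ^ 2 * (1 / ((x - 1) * x)) := by
    rw [show s / x / (1 - s / x) = s * x⁻¹ + s ^ 2 * (1 / ((x - s) * x)) by field_simp; ring]
    gcongr
  have hpos : 0 ≤ s ^ 2 * (1 / ((x - 1) * x)) := by positivity
  rw [hlog] at hlower hupper
  rw [div_eq_mul_inv] at hupper
  rw [show 1 / (x - 1) - 1 / x = 1 / ((x - 1) * x) by field_simp; ring, abs_le]
  constructor <;> linarith

theorem sq_inv_div_one_sub_sub_sq_inv_le (hx : 1 < x) :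
    (x ^ 2)⁻¹ / (1 - (x ^ 2)⁻¹) - (x ^ 2)⁻¹ ≤
      1 / ((x - 1) * x * (x + 1)) - 1 / (x * (x + 1) * (x + 2)) := by
  have hx1 : 0 < x - 1 := by linarith
  rw [show 1 - (x ^ 2)⁻¹ = (x - 1) * (x + 1) / x ^ 2 by field_simp; ring,
    show (x ^ 2)⁻¹ / ((x - 1) * (x + 1) / x ^ 2) - (x ^ 2)⁻¹ =
      1 / ((x - 1) * x * (x + 1)) * (1 / x) by field_simp; ring,
    show 1 / ((x - 1) * x * (x + 1)) - 1 / (x * (x + 1) * (x + 2)) =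
      1 / ((x - 1) * x * (x + 1)) * (3 / (x + 2)) by field_simp; ring]
  refine mul_le_mul_of_nonneg_left ?_ (by positivity)
  rw [div_le_div_iff₀ (by positivity) (by positivity)]
  linarith

/-- The primitive `x log x - x` of the logarithm. Its increments are the main terms of the
increments of `log ∘ Γ`. -/
noncomputable def logPrimitive (x : ℝ) : ℝ := x * Real.log x - x

theorem logPrimitive_second_difference (hx : 1 < x) :
    logPrimitive (x + 1) - 2 * logPrimitive x + logPrimitive (x - 1) =
      x * Real.log (1 - (x ^ 2)⁻¹) + Real.log ((x + 1) / (x - 1)) := by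
  rw [log_one_sub_sq_inv hx, Real.log_div (by positivity) (by linarith)]
  unfold logPrimitive
  ring

theorem log_le_half_sub_inv (hx : 1 ≤ x) : Real.log x ≤ (x - x⁻¹) / 2 := by
  rw [← Real.sinh_log (by positivity)]
  exact Real.self_le_sinh_iff.2 (Real.log_nonneg hx)

theorem two_div_le_log_add_one_div_sub_one (hx : 1 < x) :
    2 / x ≤ Real.log ((x + 1) / (x - 1)) := by
  have hx1 : 0 < x - 1 := by linarith
  have := Real.le_log_one_add_of_nonneg (x := 2 / (x - 1)) (by positivity)
  convert this using 1
  · field_simp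
    ring
  · congr 1
    field_simp
    ring

theorem log_add_one_div_sub_one_le (hx : 1 < x) :
    Real.log ((x + 1) / (x - 1)) ≤ 2 * x / (x ^ 2 - 1) := by
  have hx1 : 0 < x - 1 := by linarith
  refine (log_le_half_sub_inv ((one_le_div hx1).2 (by linarith))).trans_eq ?_
  rw [show x ^ 2 - 1 = (x + 1) * (x - 1) by ring]
  field_simp
  ring

theorem abs_logPrimitive_second_difference_sub_inv_le (hx : 1 < x) :
    |logPrimitive (x + 1) - 2 * logPrimitive x + logPrimitive (x - 1) - x⁻¹| ≤
      2 / ((x - 1) * x * (x + 1)) := by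
  have hx1 : 0 < x - 1 := by linarith
  have hx2 : 0 < x ^ 2 - 1 := by nlinarith
  have hu : (x ^ 2)⁻¹ < 1 := inv_lt_one_of_one_lt₀ (by linarith)
  have hx0 : 0 ≤ x := by positivity
  have hlower := mul_le_mul_of_nonneg_left (neg_div_one_sub_le_log_one_sub hu) hx0
  have hupper := mul_le_mul_of_nonneg_left (log_one_sub_le_neg hu) hx0
  have hlower_eq : x * -((x ^ 2)⁻¹ / (1 - (x ^ 2)⁻¹)) = -(x⁻¹ + 1 / ((x - 1) * x * (x + 1))) := by
    rw [show 1 - (x ^ 2)⁻¹ = (x - 1) * (x + 1) / x ^ 2 by field_simp; ring]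
    field_simp
    ring
  have hupper_eq : x * -(x ^ 2)⁻¹ = -x⁻¹ := by field_simp
  have hlog_eq : 2 * x / (x ^ 2 - 1) = 2 * x⁻¹ + 2 / ((x - 1) * x * (x + 1)) := by
    rw [show x ^ 2 - 1 = (x - 1) * (x + 1) by ring]
    field_simp
    ring
  have hlog_lower := two_div_le_log_add_one_div_sub_one hx
  have hlog_upper := log_add_one_div_sub_one_le hx
  have hpos : 0 ≤ 1 / ((x - 1) * x * (x + 1)) := by positivity
  rw [hlower_eq] at hlower
  rw [hupper_eq] at hupper
  rw [hlog_eq] at hlog_upper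
  rw [div_eq_mul_inv] at hlog_lower
  rw [logPrimitive_second_difference hx, abs_le]
  rw [show 2 / ((x - 1) * x * (x + 1)) = 2 * (1 / ((x - 1) * x * (x + 1))) by ring] at *
  constructor <;> linarith

theorem tendsto_logPrimitive_sub_sub_log :
    Tendsto (fun x => logPrimitive x - logPrimitive (x - 1) - Real.log x) atTop (𝓝 0) := by
  have hlim := (Real.tendsto_mul_log_one_add_div_atTop 1).comp
    (tendsto_atTop_add_const_right atTop (-1 : ℝ) tendsto_id)
  have hlim' := hlim.sub_const 1
  rw [sub_self] at hlim'
  refine hlim'.congr' ?_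
  filter_upwards [eventually_gt_atTop 1] with x hx
  have hx1 : 0 < x - 1 := by linarith
  simp only [Function.comp_apply, id_eq, ← sub_eq_add_neg]
  rw [show 1 + 1 / (x - 1) = x / (x - 1) by field_simp; ring,
    Real.log_div (by positivity) hx1.ne']
  unfold logPrimitive
  ring

end LogBounds

section LogGamma

variable {x h s z : ℝ}

/-- The logarithm of the Gamma function, on the positive reals. -/
noncomputable def logGamma (x : ℝ) : ℝ := Real.log (Real.Gamma x)

theorem logGamma_add_one (hx : 0 < x) : logGamma (x + 1) = logGamma x + Real.log x := by
  rw [logGamma, Real.Gamma_add_one hx.ne',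
    Real.log_mul hx.ne' (Real.Gamma_pos_of_pos hx).ne', add_comm, logGamma]

theorem logGamma_sub_logGamma_sub_le (hs : 0 < s) (hz : s < z) :
    logGamma z - logGamma (z - s) ≤ s * Real.log z := by
  have hz0 : 0 < z := hs.trans hz
  have hconvex := Real.convexOn_log_Gamma.secant_mono_aux1 (x := z - s) (y := z) (z := z + 1)
    (sub_pos.2 hz) (Set.mem_Ioi.2 (by linarith)) (by linarith) (by linarith)
  simp only [Function.comp_apply, ← logGamma.eq_1] at hconvex
  rw [logGamma_add_one hz0] at hconvex
  linarith

theorem mul_log_le_logGamma_sub_logGamma_sub (hs : 0 < s) (hz : s + 1 < z) :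
    s * Real.log (z - s - 1) ≤ logGamma z - logGamma (z - s) := by
  have hz0 : 0 < z - s - 1 := by linarith
  have hconvex := Real.convexOn_log_Gamma.secant_mono_aux1 (x := z - s - 1) (y := z - s) (z := z)
    hz0 (Set.mem_Ioi.2 (by linarith)) (by linarith) (by linarith)
  simp only [Function.comp_apply, ← logGamma.eq_1] at hconvex
  have hstep := logGamma_add_one hz0
  rw [sub_add_cancel] at hstep
  linear_combination hconvex - s * hstep

theorem tendsto_logGamma_sub_logGamma_sub_sub_log (hs : 0 < s) :
    Tendsto (fun x => logGamma x - logGamma (x - s) - s * Real.log x) atTop (𝓝 0) := by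
  have hlower : Tendsto (fun x => s * (Real.log (x + -(s + 1)) - Real.log x)) atTop (𝓝 0) := by
    simpa using (Real.tendsto_log_comp_add_sub_log (-(s + 1))).const_mul s
  refine tendsto_of_tendsto_of_tendsto_of_le_of_le' hlower tendsto_const_nhds ?_ ?_
  · filter_upwards [eventually_gt_atTop (s + 1)] with x hx
    have := mul_log_le_logGamma_sub_logGamma_sub hs hx
    rw [show x + -(s + 1) = x - s - 1 by ring]
    linarith
  · filter_upwards [eventually_gt_atTop s] with x hx
    linarith [logGamma_sub_logGamma_sub_le hs hx]

theorem tendsto_div_sub_one_mul_self (C : ℝ) :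
    Tendsto (fun x : ℝ => C / ((x - 1) * x)) atTop (𝓝 0) :=
  ((tendsto_atTop_add_const_right atTop (-1 : ℝ) tendsto_id).atTop_mul_atTop₀
    tendsto_id).const_div_atTop C

theorem tendsto_div_sub_one_mul_self_mul_add_one (C : ℝ) :
    Tendsto (fun x : ℝ => C / ((x - 1) * x * (x + 1))) atTop (𝓝 0) :=
  (((tendsto_atTop_add_const_right atTop (-1 : ℝ) tendsto_id).atTop_mul_atTop₀
    tendsto_id).atTop_mul_atTop₀ (tendsto_atTop_add_const_right _ 1 tendsto_id)).const_div_atTop C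

theorem tendsto_logGamma_second_difference_sub (hh : 0 < h) :
    Tendsto (fun x => logGamma (x + h) - 2 * logGamma x + logGamma (x - h) -
      h ^ 2 * (Real.log x - Real.log (x - 1))) atTop (𝓝 0) := by
  have hT := tendsto_logGamma_sub_logGamma_sub_sub_log hh
  have hTh := hT.comp (tendsto_atTop_add_const_right atTop h tendsto_id)
  have hlog := (Real.tendsto_log_comp_add_sub_log h).const_mul h
  have hlog' := (Real.tendsto_log_comp_add_sub_log (-1)).const_mul (h ^ 2)
  convert ((hTh.sub hT).add hlog).add hlog' using 2 with x
  · simp only [Function.comp_apply, id_eq, add_sub_cancel_right, ← sub_eq_add_neg]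
    ring
  · ring

theorem abs_logGamma_second_difference_sub_le (hh : 0 < h) (hh1 : h ≤ 1) (hx : 1 < x) :
    |logGamma (x + h) - 2 * logGamma x + logGamma (x - h) -
      h ^ 2 * (Real.log x - Real.log (x - 1))| ≤ h ^ 2 / ((x - 1) * x * (x + 1)) := by
  refine abs_le_of_abs_sub_add_one_le (f := fun x => logGamma (x + h) - 2 * logGamma x +
      logGamma (x - h) - h ^ 2 * (Real.log x - Real.log (x - 1)))
    (g := fun x => h ^ 2 / ((x - 1) * x * (x + 1))) (fun x hx => ?_)
    (tendsto_logGamma_second_difference_sub hh) (tendsto_div_sub_one_mul_self_mul_add_one _) hx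
  have hxh : 0 < x - h := by linarith
  have hstep := abs_mul_log_one_sub_sub_log_one_sub_mul_le (sq_nonneg h) (pow_le_one₀ hh.le hh1)
    (by positivity : 0 ≤ (x ^ 2)⁻¹) (inv_lt_one_of_one_lt₀ (by nlinarith))
  rw [log_one_sub_sq_mul_inv hh.le (by linarith), log_one_sub_sq_inv hx] at hstep
  have hrem := mul_le_mul_of_nonneg_left (sq_inv_div_one_sub_sub_sq_inv_le hx) (sq_nonneg h)
  rw [mul_sub (h ^ 2) (1 / _), mul_one_div, mul_one_div] at hrem
  rw [add_sub_cancel_right, show x + 1 + 1 = x + 2 by ring]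
  refine (le_of_eq (congrArg _ ?_)).trans (hstep.trans hrem)
  rw [show x + 1 + h = x + h + 1 by ring, show x + 1 - h = x - h + 1 by ring,
    logGamma_add_one (by positivity : 0 < x + h), logGamma_add_one (by positivity : 0 < x),
    logGamma_add_one hxh]
  ring

theorem abs_logGamma_sub_logGamma_sub_sub_le (hs : 0 < s) (hs1 : s ≤ 1) (hx : 1 < x) :
    |logGamma x - logGamma (x - s) - s * (logPrimitive x - logPrimitive (x - 1))| ≤
      s ^ 2 / (x - 1) + s / ((x - 1) * x) := by
  refine abs_le_of_abs_sub_add_one_le (f := fun x => logGamma x - logGamma (x - s) -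
      s * (logPrimitive x - logPrimitive (x - 1)))
    (g := fun x => s ^ 2 / (x - 1) + s / ((x - 1) * x)) (fun x hx => ?_) ?_ ?_ hx
  · have hx1 : 0 < x - 1 := by linarith
    have hxs : 0 < x - s := by linarith
    have hlog := abs_log_sub_sub_log_add_le hs1 hx
    have hH := mul_le_mul_of_nonneg_left (abs_logPrimitive_second_difference_sub_inv_le hx) hs.le
    rw [← abs_of_pos hs, ← abs_mul, abs_of_pos hs] at hH
    have hg : s ^ 2 / (x - 1) + s / ((x - 1) * x) - (s ^ 2 / x + s / (x * (x + 1))) =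
        s ^ 2 * (1 / (x - 1) - 1 / x) + s * (2 / ((x - 1) * x * (x + 1))) := by
      field_simp
      ring
    rw [add_sub_cancel_right, hg, show x + 1 - s = x - s + 1 by ring,
      logGamma_add_one (by positivity : 0 < x), logGamma_add_one hxs]
    refine (le_of_eq (congrArg _ ?_)).trans ((abs_add_le _ _).trans (add_le_add hlog hH))
    ring
  · convert (tendsto_logGamma_sub_logGamma_sub_sub_log hs).sub
      (tendsto_logPrimitive_sub_sub_log.const_mul s) using 2
    · ring
    · ring
  · simpa [sub_eq_add_neg] using ((tendsto_atTop_add_const_right atTop (-1 : ℝ)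
      tendsto_id).const_div_atTop (s ^ 2)).add (tendsto_div_sub_one_mul_self s)

end LogGamma

section GammaRatioProd

variable {q h s : ℝ}

theorem abs_sum_range_sub_le {f g : ℕ → ℝ} {B : ℝ}
    (hfg : ∀ j, |f j - (g (j + 1) - g j)| ≤ B) (n : ℕ) :
    |∑ j ∈ range n, f j - (g n - g 0)| ≤ n * B := by
  rw [← sum_range_sub, ← sum_sub_distrib, ← nsmul_eq_mul]
  simpa using (abs_sum_le_sum_abs _ _).trans (sum_le_card_nsmul (range n) _ B fun j _ => hfg j)

theorem gammaRatioProd_pos (hq : 0 < q + 1) (hs : s < q + 1) (n : ℕ) :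
    0 < gammaRatioProd q n s := by
  refine prod_pos fun j _ => ?_
  have := sub_pos.2 hs
  exact div_pos (Real.Gamma_pos_of_pos (by positivity)) (Real.Gamma_pos_of_pos (by positivity))

theorem log_gammaRatioProd (hq : 0 < q + 1) (hs : s < q + 1) (n : ℕ) :
    Real.log (gammaRatioProd q n s) =
      ∑ j ∈ range n, (logGamma (q + 1 - s + j) - logGamma (q + 1 + j)) := by
  have := sub_pos.2 hs
  have hΓ (j : ℕ) : Real.Gamma (q + 1 + j) ≠ 0 := (Real.Gamma_pos_of_pos (by positivity)).ne'
  have hΓs (j : ℕ) : Real.Gamma (q + 1 - s + j) ≠ 0 :=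
    (Real.Gamma_pos_of_pos (by positivity)).ne'
  rw [gammaRatioProd, Real.log_prod fun j _ => div_ne_zero (hΓs j) (hΓ j)]
  exact sum_congr rfl fun j _ => Real.log_div (hΓs j) (hΓ j)

theorem abs_log_gammaRatioProd_add_le (hs : 0 < s) (hs1 : s ≤ 1) (hq : 0 < q) (n : ℕ) :
    |Real.log (gammaRatioProd q n s) + s * (logPrimitive (q + n) - logPrimitive q)| ≤
      n * (s ^ 2 / q + s / q ^ 2) := by
  rw [log_gammaRatioProd (by positivity) (by linarith)]
  convert abs_sum_range_sub_le (f := fun j => logGamma (q + 1 - s + j) - logGamma (q + 1 + j))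
    (g := fun j => -(s * logPrimitive (q + j))) (fun j => ?_) n using 2
  · simp only [Nat.cast_zero, add_zero]
    ring
  have := j.cast_nonneg (α := ℝ)
  have hterm := abs_logGamma_sub_logGamma_sub_sub_le hs hs1 (x := q + 1 + j) (by linarith)
  rw [show q + 1 + j - 1 = q + j by ring] at hterm
  refine le_trans (le_of_eq ?_) (hterm.trans (add_le_add ?_ ?_))
  · rw [← abs_neg, Nat.cast_succ, show q + (j + 1) = q + 1 + j by ring,
      show q + 1 - s + j = q + 1 + j - s by ring]
    congr 1
    ring
  · gcongr
    linarith
  · rw [sq]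
    gcongr <;> linarith

theorem abs_log_gammaRatioProd_two_mul_sub_le (hh : 0 < h) (hh1 : h ≤ 1) (hhq : h < q) (n : ℕ) :
    |Real.log (gammaRatioProd q n (2 * h)) - 2 * Real.log (gammaRatioProd q n h) -
      h ^ 2 * (Real.log (q + n - h) - Real.log (q - h))| ≤ n * (h ^ 2 / (q - h) ^ 3) := by
  have := sub_pos.2 hhq
  -- The `j`-th term is a second difference of `log Γ` centred at `q + 1 + j - h`.
  rw [log_gammaRatioProd (by linarith) (by linarith), log_gammaRatioProd (by linarith)
    (by linarith), mul_sum, ← sum_sub_distrib]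
  convert abs_sum_range_sub_le (g := fun j => h ^ 2 * Real.log (q - h + j)) (fun j => ?_) n using 2
  · simp only [Nat.cast_zero, add_zero]
    rw [show q + n - h = q - h + n by ring]
    ring
  have := j.cast_nonneg (α := ℝ)
  have hterm := abs_logGamma_second_difference_sub_le hh hh1 (x := q - h + 1 + j) (by linarith)
  rw [show q - h + 1 + j - 1 = q - h + j by ring] at hterm
  refine le_trans (le_of_eq ?_) (hterm.trans ?_)
  · rw [Nat.cast_succ, show q - h + (j + 1) = q - h + 1 + j by ring,
      show q + 1 - 2 * h + j = q - h + 1 + j - h by ring,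
      show q + 1 + j = q - h + 1 + j + h by ring, show q + 1 - h + j = q - h + 1 + j by ring]
    congr 1
    ring
  · rw [show (q - h) ^ 3 = (q - h) * (q - h) * (q - h) by ring]
    gcongr <;> linarith

end GammaRatioProd

/-- The factor `e² (1 - c) ^ (2 (1 - c) / c)` of the limiting variance. -/
noncomputable def varianceScale (c : ℝ) : ℝ :=
  Real.exp 1 ^ 2 * (1 - c) ^ (2 * (1 - c) / c)

section VarianceScale

variable {c : ℝ}

theorem varianceScale_pos (hc : c < 1) : 0 < varianceScale c :=
  mul_pos (by positivity) (Real.rpow_pos_of_pos (sub_pos.2 hc) _)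

theorem varianceScale_le (hc : 0 ≤ c) (hc1 : c < 1) : varianceScale c ≤ Real.exp 1 ^ 2 := by
  have := sub_pos.2 hc1
  exact mul_le_of_le_one_right (by positivity)
    (Real.rpow_le_one (by positivity) (by linarith) (by positivity))

theorem log_varianceScale (hc : c < 1) :
    Real.log (varianceScale c) = 2 + 2 * (1 - c) / c * Real.log (1 - c) := by
  have := sub_pos.2 hc
  rw [varianceScale, Real.log_mul (by positivity) (by positivity), Real.log_pow, Real.log_exp,
    Real.log_rpow this]
  norm_num

theorem two_div_mul_logPrimitive_sub {x y : ℝ} (hy : 0 < y) (hyx : y < x) :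
    2 / y * (logPrimitive x - logPrimitive (x - y)) =
      2 * Real.log x - Real.log (varianceScale (y / x)) := by
  have hx : 0 < x := hy.trans hyx
  have hxy : x - y ≠ 0 := (sub_pos.2 hyx).ne'
  rw [log_varianceScale ((div_lt_one hx).2 hyx), one_sub_div hx.ne', Real.log_div hxy hx.ne']
  unfold logPrimitive
  field_simp
  ring

end VarianceScale

section GammaRatioProdBounds

variable {n m : ℕ} {δ : ℝ}

theorem abs_log_sub_sub_log_sub_sub_log_div_le {x y t : ℝ} (hy : 0 < y - t) (hyx : y ≤ x)
    (ht : 0 ≤ t) : |Real.log (x - t) - Real.log (y - t) - Real.log (x / y)| ≤ t / (y - t) := by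
  have hy0 : 0 < y := by linarith
  have hxt : 0 < x - t := by linarith
  have log_sub_log_sub {z : ℝ} (hz : 0 < z - t) :
      Real.log z - Real.log (z - t) ≤ t / (z - t) := by
    rw [← Real.log_div (by linarith) hz.ne']
    refine (Real.log_le_sub_one_of_pos (div_pos (by linarith) hz)).trans_eq ?_
    field_simp
    ring
  have hx_le := log_sub_log_sub hxt
  have hy_le := log_sub_log_sub hy
  have hmono : t / (x - t) ≤ t / (y - t) := by gcongr
  have hlogx : Real.log (x - t) ≤ Real.log x := Real.log_le_log hxt (by linarith)
  have hlogy : Real.log (y - t) ≤ Real.log y := Real.log_le_log hy (by linarith)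
  rw [Real.log_div (by linarith) hy0.ne', abs_le]
  constructor <;> linarith

theorem abs_log_sq_mul_gammaRatioProd_sub_le (hδ : 0 < δ) (hn : 2 ≤ n)
    (hδn : δ * n ≤ m - n - 1 / n) :
    |Real.log ((m : ℝ) ^ 2 * gammaRatioProd (m - n) n (2 / n)) -
      Real.log (varianceScale (n / m))| ≤ (4 / δ + 2 / δ ^ 2) * (1 / (n : ℝ) ^ 2) := by
  have hn2 : (2 : ℝ) ≤ n := by exact_mod_cast hn
  have hn0 : (0 : ℝ) < n := by linarith
  have hq : δ * n ≤ m - n := hδn.trans (sub_le_self _ (by positivity))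
  have hq0 : (0 : ℝ) < m - n := (by positivity : 0 < δ * n).trans_le hq
  have hs1 : 2 / (n : ℝ) ≤ 1 := (div_le_one hn0).2 hn2
  have hP := abs_log_gammaRatioProd_add_le (by positivity) hs1 hq0 n
  rw [sub_add_cancel, two_div_mul_logPrimitive_sub hn0 (sub_pos.1 hq0)] at hP
  rw [Real.log_mul (by nlinarith) (gammaRatioProd_pos (by linarith) (by linarith) n).ne',
    Real.log_pow]
  calc _ = |Real.log (gammaRatioProd (m - n) n (2 / n)) +
        (2 * Real.log m - Real.log (varianceScale (n / m)))| := by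
        congr 1
        push_cast
        ring
    _ ≤ n * ((2 / n) ^ 2 / (m - n) + 2 / n / (m - n) ^ 2) := hP
    _ ≤ n * ((2 / n) ^ 2 / (δ * n) + 2 / n / (δ * n) ^ 2) := by gcongr
    _ = (4 / δ + 2 / δ ^ 2) * (1 / (n : ℝ) ^ 2) := by
        field_simp
        ring

theorem abs_sq_mul_log_gammaRatioProd_sub_le (hδ : 0 < δ) (hn : 2 ≤ n)
    (hδn : δ * n ≤ m - n - 1 / n) :
    |(n : ℝ) ^ 2 * (Real.log (gammaRatioProd (m - n) n (2 / n)) -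
        2 * Real.log (gammaRatioProd (m - n) n (1 / n))) - Real.log (1 / (1 - n / m))| ≤
      (1 / δ ^ 3 + 1 / δ) * (1 / (n : ℝ) ^ 2) := by
  have hn2 : (2 : ℝ) ≤ n := by exact_mod_cast hn
  have hn0 : (0 : ℝ) < n := by linarith
  have hq0 : (0 : ℝ) < m - n - 1 / n := (by positivity : 0 < δ * n).trans_le hδn
  have hm : (m : ℝ) ≠ 0 := by
    have : (0 : ℝ) < 1 / n := by positivity
    linarith
  have hP := abs_log_gammaRatioProd_two_mul_sub_le (by positivity) ((div_le_one hn0).2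
    (by linarith)) (sub_pos.1 hq0) n
  rw [sub_add_cancel, mul_one_div] at hP
  have hlog := abs_log_sub_sub_log_sub_sub_log_div_le (x := m) hq0 (by linarith)
    (by positivity : (0 : ℝ) ≤ 1 / n)
  rw [show (m : ℝ) / (m - n) = 1 / (1 - n / m) by rw [one_sub_div hm, one_div_div]] at hlog
  set D := Real.log (gammaRatioProd (m - n) n (2 / n)) -
    2 * Real.log (gammaRatioProd (m - n) n (1 / n))
  set L := Real.log (m - 1 / n) - Real.log (m - n - 1 / n)
  calc _ = |(n : ℝ) ^ 2 * (D - (1 / n) ^ 2 * L) + (L - Real.log (1 / (1 - n / m)))| := by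
        congr 1
        field_simp
        ring
    _ ≤ (n : ℝ) ^ 2 * |D - (1 / n) ^ 2 * L| + |L - Real.log (1 / (1 - n / m))| := by
        refine (abs_add_le _ _).trans_eq ?_
        rw [abs_mul, abs_of_nonneg (by positivity : (0 : ℝ) ≤ (n : ℝ) ^ 2)]
    _ ≤ (n : ℝ) ^ 2 * (n * ((1 / n) ^ 2 / (m - n - 1 / n) ^ 3)) + 1 / n / (m - n - 1 / n) := by
        gcongr
    _ ≤ (n : ℝ) ^ 2 * (n * ((1 / n) ^ 2 / (δ * n) ^ 3)) + 1 / n / (δ * n) := by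
        gcongr
    _ = (1 / δ ^ 3 + 1 / δ) * (1 / (n : ℝ) ^ 2) := by
        field_simp

end GammaRatioProdBounds

section Asymptotics

variable {ι : Type*} {l : Filter ι}

theorem isBigO_mul_sub_mul {f f₀ h h₀ g : ι → ℝ} (hf : (fun i => f i - f₀ i) =O[l] g)
    (hh : (fun i => h i - h₀ i) =O[l] g) (hf₀ : f₀ =O[l] fun _ => (1 : ℝ))
    (hh₀ : h₀ =O[l] fun _ => (1 : ℝ)) (hg : g =O[l] fun _ => (1 : ℝ)) :
    (fun i => f i * h i - f₀ i * h₀ i) =O[l] g := by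
  have hfh : (fun i => (f i - f₀ i) * (h i - h₀ i)) =O[l] g := by
    simpa using hf.mul (hh.trans hg)
  have hfh₀ : (fun i => (f i - f₀ i) * h₀ i) =O[l] g := by simpa using hf.mul hh₀
  have hf₀h : (fun i => f₀ i * (h i - h₀ i)) =O[l] g := by simpa using hf₀.mul hh
  refine ((hfh.add hfh₀).add hf₀h).congr_left fun i => ?_
  ring

theorem isBigO_sub_of_log_sub {f f₀ g : ι → ℝ} (hf : ∀ᶠ i in l, 0 < f i)
    (hf₀ : ∀ᶠ i in l, 0 < f₀ i) (hf₀_bdd : f₀ =O[l] fun _ => (1 : ℝ))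
    (hlog : (fun i => Real.log (f i) - Real.log (f₀ i)) =O[l] g) (hg : Tendsto g l (𝓝 0)) :
    (fun i => f i - f₀ i) =O[l] g := by
  have hexp := ((Real.exp_sub_sum_range_isBigO_pow 1).comp_tendsto
    (hlog.trans_tendsto hg)).trans (hlog.congr_left fun i => (pow_one _).symm)
  refine (hf₀_bdd.mul hexp).congr' ?_ (by simp)
  filter_upwards [hf, hf₀] with i hi hi₀
  simp only [Function.comp_apply, sum_range_one, pow_zero, Nat.factorial_zero, Nat.cast_one,
    div_one, Real.exp_sub, Real.exp_log hi, Real.exp_log hi₀]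
  field_simp

theorem isBigO_sq_mul_one_sub_exp_neg_sub {N ρ L : ι → ℝ} (hN : Tendsto N l atTop)
    (hL : L =O[l] fun _ => (1 : ℝ))
    (hρ : (fun i => N i ^ 2 * ρ i - L i) =O[l] fun i => 1 / N i ^ 2) :
    (fun i => N i ^ 2 * (1 - Real.exp (-ρ i)) - L i) =O[l] fun i => 1 / N i ^ 2 := by
  have hN0 : ∀ᶠ i in l, N i ≠ 0 := hN.eventually_ne_atTop 0
  have hg : Tendsto (fun i => 1 / N i ^ 2) l (𝓝 0) :=
    ((tendsto_pow_atTop two_ne_zero).comp hN).const_div_atTop 1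
  have hNρ : (fun i => N i ^ 2 * ρ i) =O[l] fun _ => (1 : ℝ) :=
    ((hρ.trans (hg.isBigO_one ℝ)).add hL).congr_left fun i => by ring
  have hρ_small : ρ =O[l] fun i => 1 / N i ^ 2 := by
    refine ((isBigO_refl (fun i => 1 / N i ^ 2) l).mul hNρ).congr' ?_ (by simp)
    filter_upwards [hN0] with i hi
    field_simp
  have hexp := (Real.exp_sub_sum_range_isBigO_pow 2).comp_tendsto
    (hρ_small.neg_left.trans_tendsto hg)
  have hquad : (fun i => N i ^ 2 * (Real.exp (-ρ i) - (1 - ρ i))) =O[l] fun i => 1 / N i ^ 2 := by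
    refine ((isBigO_refl (fun i => N i ^ 2) l).mul
      (hexp.trans (hρ_small.neg_left.pow 2))).congr' (.of_forall fun i => ?_) ?_
    · simp [sum_range_succ, sub_eq_add_neg]
    · filter_upwards [hN0] with i hi
      field_simp
  refine (hρ.sub hquad).congr_left fun i => ?_
  ring

variable {n m : ι → ℕ} {κ : ℝ}

theorem eventually_natCast_pos (hn : Tendsto n l atTop) (hnm : ∀ᶠ i in l, (n i : ℝ) ≤ κ * m i) :
    ∀ᶠ i in l, (0 : ℝ) < n i ∧ (0 : ℝ) < m i := by
  filter_upwards [hn.eventually_gt_atTop 0, hnm] with i hi him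
  have hn0 : (0 : ℝ) < n i := Nat.cast_pos.2 hi
  refine ⟨hn0, (m i).cast_nonneg.lt_of_ne' fun h => ?_⟩
  rw [h, mul_zero] at him
  exact him.not_gt hn0

theorem eventually_mul_le_sub_sub_one_div (hn : Tendsto n l atTop) (hκ : κ < 1)
    (hnm : ∀ᶠ i in l, (n i : ℝ) ≤ κ * m i) :
    ∀ᶠ i in l, (1 - κ) / 2 * n i ≤ m i - n i - 1 / n i := by
  have hκ' : 0 < (1 - κ) / 2 := by linarith
  have hlarge := ((tendsto_natCast_atTop_atTop.comp hn).const_mul_atTop hκ').eventually_ge_atTop 1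
  filter_upwards [hn.eventually_ge_atTop 1, hnm, hlarge] with i hi1 him hi
  have hn1 : (1 : ℝ) ≤ n i := by exact_mod_cast hi1
  have hinv : 1 / (n i : ℝ) ≤ 1 := (div_le_one (by linarith)).2 hn1
  have := (m i).cast_nonneg (α := ℝ)
  have hmn : (n i : ℝ) ≤ m i := by nlinarith
  simp only [Function.comp_apply] at hi
  nlinarith

theorem eventually_div_mem_Icc (hn : Tendsto n l atTop) (hnm : ∀ᶠ i in l, (n i : ℝ) ≤ κ * m i) :
    ∀ᶠ i in l, (n i / m i : ℝ) ∈ Set.Icc 0 κ := by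
  filter_upwards [eventually_natCast_pos hn hnm, hnm] with i ⟨hn0, hm0⟩ hi
  exact ⟨by positivity, (div_le_iff₀ hm0).2 hi⟩

theorem tendsto_one_div_natCast_sq (hn : Tendsto n l atTop) :
    Tendsto (fun i => 1 / (n i : ℝ) ^ 2) l (𝓝 0) :=
  ((tendsto_pow_atTop two_ne_zero).comp
    (tendsto_natCast_atTop_atTop.comp hn)).const_div_atTop 1

theorem eventually_gammaRatioProd_pos (hn : Tendsto n l atTop) (hκ : κ < 1)
    (hnm : ∀ᶠ i in l, (n i : ℝ) ≤ κ * m i) (p : ℝ) :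
    ∀ᶠ i in l, 0 < gammaRatioProd (m i - n i) (n i) (p / n i) := by
  have hp := (tendsto_natCast_atTop_atTop.comp hn).const_div_atTop p
  filter_upwards [hp.eventually_lt_const one_pos, hnm] with i hpi hi
  have hq : (0 : ℝ) ≤ m i - n i :=
    sub_nonneg.2 (hi.trans (mul_le_of_le_one_left (m i).cast_nonneg hκ.le))
  exact gammaRatioProd_pos (by positivity) (hpi.trans_le (by linarith)) _

theorem isBigO_varianceScale (hn : Tendsto n l atTop) (hκ : κ < 1)
    (hnm : ∀ᶠ i in l, (n i : ℝ) ≤ κ * m i) :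
    (fun i => varianceScale (n i / m i)) =O[l] fun _ => (1 : ℝ) := by
  refine .of_bound (Real.exp 1 ^ 2) ?_
  filter_upwards [eventually_div_mem_Icc hn hnm] with i hi
  have hc1 := hi.2.trans_lt hκ
  simpa [abs_of_pos (varianceScale_pos hc1)] using varianceScale_le hi.1 hc1

theorem isBigO_log_one_div_one_sub (hn : Tendsto n l atTop) (hκ : κ < 1)
    (hnm : ∀ᶠ i in l, (n i : ℝ) ≤ κ * m i) :
    (fun i => Real.log (1 / (1 - n i / m i))) =O[l] fun _ => (1 : ℝ) := by
  refine .of_bound (Real.log (1 / (1 - κ))) ?_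
  filter_upwards [eventually_div_mem_Icc hn hnm] with i hi
  have := sub_pos.2 hκ
  have hle : 1 - κ ≤ 1 - n i / m i := by linarith [hi.2]
  have hone_le : 1 ≤ 1 / (1 - n i / m i : ℝ) := (one_le_div (by linarith)).2 (by linarith [hi.1])
  rw [Real.norm_of_nonneg (Real.log_nonneg hone_le), norm_one, mul_one]
  gcongr

theorem isBigO_div (hn : Tendsto n l atTop) (hnm : ∀ᶠ i in l, (n i : ℝ) ≤ κ * m i) :
    (fun i => (n i / m i : ℝ)) =O[l] fun _ => (1 : ℝ) := by
  refine .of_bound κ ?_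
  filter_upwards [eventually_div_mem_Icc hn hnm] with i hi
  simpa [abs_of_nonneg hi.1] using hi.2

theorem isBigO_sq_mul_gammaRatioProd_sub (hn : Tendsto n l atTop) (hκ : κ < 1)
    (hnm : ∀ᶠ i in l, (n i : ℝ) ≤ κ * m i) :
    (fun i => (m i : ℝ) ^ 2 * gammaRatioProd (m i - n i) (n i) (2 / n i) -
      varianceScale (n i / m i)) =O[l] fun i => 1 / (n i : ℝ) ^ 2 := by
  have hgap := eventually_mul_le_sub_sub_one_div hn hκ hnm
  have hκ' : 0 < (1 - κ) / 2 := by linarith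
  refine isBigO_sub_of_log_sub ?_ ?_ (isBigO_varianceScale hn hκ hnm)
    (.of_bound (4 / ((1 - κ) / 2) + 2 / ((1 - κ) / 2) ^ 2) ?_) (tendsto_one_div_natCast_sq hn)
  · filter_upwards [eventually_natCast_pos hn hnm, eventually_gammaRatioProd_pos hn hκ hnm 2]
      with i hi hP₂
    have := hi.2
    positivity
  · filter_upwards [eventually_div_mem_Icc hn hnm] with i hi
    exact varianceScale_pos (hi.2.trans_lt hκ)
  · filter_upwards [hgap, hn.eventually_ge_atTop 2] with i hi hn2
    rw [Real.norm_eq_abs, Real.norm_of_nonneg (by positivity)]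
    exact abs_log_sq_mul_gammaRatioProd_sub_le hκ' hn2 hi

theorem isBigO_sq_mul_one_sub_gammaRatioProd_sq_div_sub (hn : Tendsto n l atTop) (hκ : κ < 1)
    (hnm : ∀ᶠ i in l, (n i : ℝ) ≤ κ * m i) :
    (fun i => (n i : ℝ) ^ 2 * (1 - gammaRatioProd (m i - n i) (n i) (1 / n i) ^ 2 /
      gammaRatioProd (m i - n i) (n i) (2 / n i)) - Real.log (1 / (1 - n i / m i)))
      =O[l] fun i => 1 / (n i : ℝ) ^ 2 := by
  have hgap := eventually_mul_le_sub_sub_one_div hn hκ hnm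
  have hκ' : 0 < (1 - κ) / 2 := by linarith
  refine (isBigO_sq_mul_one_sub_exp_neg_sub (N := fun i => (n i : ℝ))
    (ρ := fun i => Real.log (gammaRatioProd (m i - n i) (n i) (2 / n i)) -
      2 * Real.log (gammaRatioProd (m i - n i) (n i) (1 / n i)))
    (tendsto_natCast_atTop_atTop.comp hn) (isBigO_log_one_div_one_sub hn hκ hnm)
    (.of_bound (1 / ((1 - κ) / 2) ^ 3 + 1 / ((1 - κ) / 2)) ?_)).congr' ?_ .rfl
  · filter_upwards [hgap, hn.eventually_ge_atTop 2] with i hi hn2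
    rw [Real.norm_eq_abs, Real.norm_of_nonneg (by positivity)]
    exact abs_sq_mul_log_gammaRatioProd_sub_le hκ' hn2 hi
  · filter_upwards [eventually_gammaRatioProd_pos hn hκ hnm 1,
      eventually_gammaRatioProd_pos hn hκ hnm 2] with i hP₁ hP₂
    rw [neg_sub, Real.exp_sub, Real.exp_log hP₂, two_mul, Real.exp_add, Real.exp_log hP₁, ← sq]

theorem isBigO_one_div_mul (hn : Tendsto n l atTop) (hκ : κ < 1)
    (hnm : ∀ᶠ i in l, (n i : ℝ) ≤ κ * m i) :
    (fun i => 1 / (n i * m i : ℝ)) =O[l] fun i => 1 / (n i : ℝ) ^ 2 := by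
  refine .of_bound 1 ?_
  filter_upwards [eventually_natCast_pos hn hnm, hnm] with i ⟨hn0, hm0⟩ hi
  have hnm' : (n i : ℝ) ≤ m i := hi.trans (mul_le_of_le_one_left hm0.le hκ.le)
  rw [Real.norm_of_nonneg (by positivity), Real.norm_of_nonneg (by positivity), one_mul, sq]
  gcongr

theorem isBigO_varianceCoeffTwo_sub (hn : Tendsto n l atTop) (hκ : κ < 1)
    (hnm : ∀ᶠ i in l, (n i : ℝ) ≤ κ * m i) :
    (fun i => varianceCoeffTwo (n i) (m i) - varianceScale (n i / m i) * (n i / m i))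
      =O[l] fun i => 1 / (n i : ℝ) ^ 2 := by
  have hc := isBigO_div hn hnm
  have hfactor : (fun i => n i / m i * (1 - 2 * (1 / (n i * m i))) - n i / m i : ι → ℝ)
      =O[l] fun i => 1 / (n i : ℝ) ^ 2 := by
    refine ((hc.mul (isBigO_one_div_mul hn hκ hnm)).const_mul_left (-2)).congr
      (fun i => ?_) (fun i => one_mul _)
    ring
  refine (isBigO_mul_sub_mul (isBigO_sq_mul_gammaRatioProd_sub hn hκ hnm) hfactor
    (isBigO_varianceScale hn hκ hnm) hc
    ((tendsto_one_div_natCast_sq hn).isBigO_one ℝ)).congr' ?_ .rfl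
  filter_upwards [eventually_natCast_pos hn hnm] with i ⟨hn0, hm0⟩
  unfold varianceCoeffTwo
  field_simp

theorem isBigO_varianceCoeffOne_sub (hn : Tendsto n l atTop) (hκ : κ < 1)
    (hnm : ∀ᶠ i in l, (n i : ℝ) ≤ κ * m i) :
    (fun i => varianceCoeffOne (n i) (m i) -
      varianceScale (n i / m i) * (Real.log (1 / (1 - n i / m i)) - 2 * (n i / m i)))
      =O[l] fun i => 1 / (n i : ℝ) ^ 2 := by
  have hc := isBigO_div hn hnm
  have hlog := isBigO_log_one_div_one_sub hn hκ hnm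
  have hg := (tendsto_one_div_natCast_sq hn).isBigO_one ℝ
  have he := isBigO_one_div_mul hn hκ hnm
  have hone : (fun _ : ι => (1 : ℝ)) =O[l] fun _ => (1 : ℝ) := isBigO_refl _ _
  have hsq : (fun i => (1 - 1 / (n i * m i)) ^ 2 - 1 : ι → ℝ) =O[l] fun i => 1 / (n i : ℝ) ^ 2 := by
    have hsub : (fun i => (1 - 1 / (n i * m i)) - 1 : ι → ℝ) =O[l] fun i => 1 / (n i : ℝ) ^ 2 :=
      he.neg_left.congr_left fun i => by ring
    exact (isBigO_mul_sub_mul hsub hsub hone hone hg).congr_left fun i => by ring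
  have hratio := isBigO_mul_sub_mul (isBigO_sq_mul_one_sub_gammaRatioProd_sq_div_sub hn hκ hnm)
    hsq hlog hone hg
  have hce := ((hc.mul he).const_mul_left 3).congr_right fun i => one_mul _
  -- With `e = 1 / (n m)` and `R = P₁² / P₂`, the bracket is `n² ((1 - 2 e)² - R (1 - e)²)`.
  have hbracket : (fun i => ((n i : ℝ) ^ 2 * (1 - gammaRatioProd (m i - n i) (n i) (1 / n i) ^ 2 /
      gammaRatioProd (m i - n i) (n i) (2 / n i)) * (1 - 1 / (n i * m i)) ^ 2 - 2 * (n i / m i) +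
      3 * (n i / m i * (1 / (n i * m i)))) - (Real.log (1 / (1 - n i / m i)) - 2 * (n i / m i)))
      =O[l] fun i => 1 / (n i : ℝ) ^ 2 :=
    (hratio.add hce).congr_left fun i => by ring
  refine (isBigO_mul_sub_mul (isBigO_sq_mul_gammaRatioProd_sub hn hκ hnm) hbracket
    (isBigO_varianceScale hn hκ hnm) (hlog.sub (hc.const_mul_left 2)) hg).congr' ?_ .rfl
  filter_upwards [eventually_natCast_pos hn hnm, eventually_gammaRatioProd_pos hn hκ hnm 2]
    with i ⟨hn0, hm0⟩ hP₂
  unfold varianceCoeffOne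
  field_simp
  ring

end Asymptotics

section Bounds

variable {n : ℕ} {y : Fin n → ℝ} {N0 Y : ℝ}

theorem Psi1_mem_Icc (hn : n ≠ 0) (hN0 : 0 < N0) (hy : ∀ i, N0 ≤ y i) :
    Psi1 y ∈ Set.Icc 0 N0⁻¹ := by
  have hpos (i : Fin n) : 0 ≤ y i ^ (-(1 : ℝ) / n) :=
    Real.rpow_nonneg (hN0.le.trans (hy i)) _
  refine ⟨prod_nonneg fun i _ => hpos i, ?_⟩
  calc ∏ i, y i ^ (-(1 : ℝ) / n) ≤ ∏ _i : Fin n, N0 ^ (-(1 : ℝ) / n) :=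
        prod_le_prod (fun i _ => hpos i) fun i _ => Real.rpow_le_rpow_of_nonpos hN0 (hy i)
          (div_nonpos_of_nonpos_of_nonneg (by simp) n.cast_nonneg)
    _ = N0⁻¹ := by
        rw [prod_const, card_univ, Fintype.card_fin, ← Real.rpow_mul_natCast hN0.le,
          div_mul_cancel₀ _ (Nat.cast_ne_zero.2 hn), Real.rpow_neg_one]

theorem PsiS_mem_Icc (hn : n ≠ 0) (hy0 : ∀ i, 0 ≤ y i) (hyY : ∀ i, y i ≤ Y) (ℓ : ℕ) :
    PsiS ℓ y ∈ Set.Icc 0 (Y ^ ℓ) := by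
  refine ⟨mul_nonneg (by positivity) (sum_nonneg fun i _ => pow_nonneg (hy0 i) ℓ), ?_⟩
  calc 1 / (n : ℝ) * ∑ i, y i ^ ℓ ≤ 1 / (n : ℝ) * ∑ _i : Fin n, Y ^ ℓ := by
        gcongr with i
        · exact hy0 i
        · exact hyY i
    _ = Y ^ ℓ := by
        rw [sum_const, card_univ, Fintype.card_fin, nsmul_eq_mul]
        field_simp

end Bounds

theorem abs_sq_mul_add_mul_le {P S T A B K₁ K₂ M Y g : ℝ} (hP : P ∈ Set.Icc 0 M)
    (hS : S ∈ Set.Icc 0 Y) (hT : T ∈ Set.Icc 0 (Y ^ 2)) (hA : |A| ≤ K₁ * g)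
    (hB : |B| ≤ K₂ * g) :
    |P ^ 2 * (A * S ^ 2 + B * T)| ≤ M ^ 2 * (K₁ + K₂) * Y ^ 2 * g := by
  have hS2 : S ^ 2 ≤ Y ^ 2 := pow_le_pow_left₀ hS.1 hS.2 2
  have hA0 := (abs_nonneg A).trans hA
  have hB0 := (abs_nonneg B).trans hB
  have hT0 := hT.1
  calc |P ^ 2 * (A * S ^ 2 + B * T)| ≤ P ^ 2 * (|A| * S ^ 2 + |B| * T) := by
        rw [abs_mul, abs_of_nonneg (sq_nonneg P)]
        gcongr
        refine (abs_add_le _ _).trans_eq ?_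
        rw [abs_mul, abs_mul, abs_of_nonneg (sq_nonneg S), abs_of_nonneg hT0]
    _ ≤ M ^ 2 * (K₁ * g * Y ^ 2 + K₂ * g * Y ^ 2) := by
        gcongr
        · exact hP.1
        · exact hP.2
        · exact hT.2
    _ = M ^ 2 * (K₁ + K₂) * Y ^ 2 * g := by ring

theorem mu1_variance_asymptotic_general {ι : Type*} {l : Filter ι} {n m : ι → ℕ} {κ N0 Y : ℝ}
    (hn : Tendsto n l atTop) (hκ : κ < 1) (hnm : ∀ᶠ i in l, (n i : ℝ) ≤ κ * m i)
    (hN0 : 0 < N0) :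
    ∃ C : ℝ, 0 < C ∧ ∀ᶠ i in l, ∀ y : Fin (n i) → ℝ, (∀ j, N0 ≤ y j) → (∀ j, y j ≤ Y) →
      |(n i : ℝ) ^ 2 * (mu1 2 (n i) (m i) y - mu1 1 (n i) (m i) y ^ 2) -
          Psi1 y ^ 2 * Real.exp 1 ^ 2
            * (1 - (n i : ℝ) / m i) ^ (2 * (1 - (n i : ℝ) / m i) / ((n i : ℝ) / m i))
            * ((Real.log (1 / (1 - (n i : ℝ) / m i)) - 2 * ((n i : ℝ) / m i)) * PsiS 1 y ^ 2
                + ((n i : ℝ) / m i) * PsiS 2 y)|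
        ≤ C / (n i : ℝ) ^ 2 := by
  obtain ⟨K₁, hK₁, hA⟩ := (isBigO_varianceCoeffOne_sub hn hκ hnm).exists_pos
  obtain ⟨K₂, hK₂, hB⟩ := (isBigO_varianceCoeffTwo_sub hn hκ hnm).exists_pos
  refine ⟨N0⁻¹ ^ 2 * (K₁ + K₂) * (Y ^ 2 + 1), by positivity, ?_⟩
  filter_upwards [hA.bound, hB.bound, hn.eventually_ge_atTop 2, hnm] with i hAi hBi hn2 hi y hy hyY
  have hn0 : n i ≠ 0 := by omega
  have hnm' : n i ≤ m i := by
    exact_mod_cast hi.trans (mul_le_of_le_one_left (m i).cast_nonneg hκ.le)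
  have hy0 (j : Fin (n i)) : 0 < y j := hN0.trans_le (hy j)
  have hS := PsiS_mem_Icc hn0 (fun j => (hy0 j).le) hyY
  rw [Real.norm_eq_abs, Real.norm_of_nonneg (by positivity)] at hAi hBi
  have hmain := abs_sq_mul_add_mul_le (Psi1_mem_Icc hn0 hN0 hy) (by simpa using hS 1) (hS 2) hAi hBi
  rw [sq_mul_mu1_two_sub_mu1_one_sq hn2 hnm' hy0]
  calc _ = _ := by
        congr 1
        simp only [varianceScale]
        ring
    _ ≤ _ := hmain
    _ ≤ N0⁻¹ ^ 2 * (K₁ + K₂) * (Y ^ 2 + 1) * (1 / (n i : ℝ) ^ 2) := by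
        gcongr
        linarith
    _ = _ := by ring

/-- uniform asymptotic approximation of the variance (second cumulant) of
the GLRT statistic under `H₁`, uniformly over eigenvalue vectors `y` with entries in
`[N0, Y]`, along `n = a·t`, `m = b·t` with `c = a/b ∈ (0,1)`. -/
theorem mu1_variance_asymptotic (a b : ℕ) (ha : 0 < a) (hab : a < b)
    (N0 Y : ℝ) (hN0 : 0 < N0) (hNY : N0 ≤ Y) :
    ∃ C : ℝ, 0 < C ∧ ∃ T : ℕ, 0 < T ∧ ∀ t : ℕ, T ≤ t →
      ∀ y : Fin (a * t) → ℝ, (∀ i, N0 ≤ y i) → (∀ i, y i ≤ Y) → Monotone y →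
        |((a * t : ℕ) : ℝ) ^ 2 * (mu1 2 (a * t) (b * t) y - (mu1 1 (a * t) (b * t) y) ^ 2) -
            Psi1 y ^ 2 * Real.exp 1 ^ 2
              * (1 - (a : ℝ) / b) ^ (2 * (1 - (a : ℝ) / b) / ((a : ℝ) / b))
              * ((Real.log (1 / (1 - (a : ℝ) / b)) - 2 * ((a : ℝ) / b)) * PsiS 1 y ^ 2
                  + ((a : ℝ) / b) * PsiS 2 y)|
          ≤ C / ((a * t : ℕ) : ℝ) ^ 2 := by
  have hn : Tendsto (fun t => a * t) atTop atTop := tendsto_id.const_mul_atTop' ha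
  have hb : (0 : ℝ) < b := by exact_mod_cast ha.trans hab
  obtain ⟨C, hC, hbound⟩ := mu1_variance_asymptotic_general (m := fun t => b * t) (Y := Y) hn
    ((div_lt_one hb).2 (by exact_mod_cast hab : (a : ℝ) < b))
    (.of_forall fun t => le_of_eq (by push_cast; field_simp)) hN0
  obtain ⟨T, hT⟩ := eventually_atTop.1 hbound
  refine ⟨C, hC, T + 1, T.succ_pos, fun t ht y hy hyY _ => ?_⟩
  have hc : ((a * t : ℕ) : ℝ) / (b * t : ℕ) = a / b := by
    push_cast
    exact mul_div_mul_right _ _ (Nat.cast_ne_zero.2 (by omega))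
  simpa only [hc] using hT t (by omega) y hy hyY
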